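/- Let A be an irreducible hyperplane arrangement of rank at least 3 containing a generic hyperplane H_0 (i.e., every rank-2 flat contained in H_0 lies on exactly 2 hyperplanes of A). Then A is totally nonfree: for every multiplicity function m: A → Z_{>0}, the multiarrangement (A,m) is not free. -/

import Mathlib

open scoped Classical
open MvPolynomial

namespace ArrPaper

variable {K : Type*} [Field K] {ℓ : ℕ}

/-- The coordinate ring `S = K[x₁,…,x_ℓ]`. -/
noncomputable abbrev S (K : Type*) [Field K] (ℓ : ℕ) := MvPolynomial (Fin ℓ) K

/-- The linear form associated to a covector `c`. -/
noncomputable def linForm (c : Fin ℓ → K) : S K ℓ :=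
  ∑ i, MvPolynomial.C (c i) * MvPolynomial.X i

/-- The linear functional associated to a covector. -/
noncomputable def toFunc (c : Fin ℓ → K) : (Fin ℓ → K) →ₗ[K] K :=
  ∑ i, c i • LinearMap.proj i

/-- A (central) hyperplane arrangement, given by a finite set of nonzero,
pairwise non-proportional covectors (defining linear forms). -/
structure Arrangement (K : Type*) [Field K] (ℓ : ℕ) where
  hyps : Finset (Fin ℓ → K)
  ne_zero : ∀ c ∈ hyps, c ≠ 0
  nonparallel : ∀ c ∈ hyps, ∀ c' ∈ hyps, c ≠ c' → ∀ t : K, c' ≠ t • c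

/-- Derivations of the polynomial ring `S`. -/
abbrev Der (K : Type*) [Field K] (ℓ : ℕ) := Derivation K (S K ℓ) (S K ℓ)

/-- `θ` is a logarithmic derivation of the multiarrangement `(A, m)`, i.e.
`θ(α_H) ∈ α_H^{m(H)}·S` for all `H ∈ A`. -/
def IsLogDer (A : Arrangement K ℓ) (m : (Fin ℓ → K) → ℕ) (θ : Der K ℓ) : Prop :=
  ∀ c ∈ A.hyps, (linForm c) ^ (m c) ∣ θ (linForm c)

/-- `θ` is homogeneous of polynomial degree `d`: `θ(α)` is homogeneous of degree `d`
for every linear form `α`. -/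
def IsHomogOfDeg (θ : Der K ℓ) (d : ℕ) : Prop :=
  ∀ c : Fin ℓ → K, (θ (linForm c)).IsHomogeneous d

/-- `θ₁, …, θ_ℓ` form a basis of the `S`-module `D(A,m)`. -/
def IsDerBasis (A : Arrangement K ℓ) (m : (Fin ℓ → K) → ℕ) (θ : Fin ℓ → Der K ℓ) : Prop :=
  (∀ i, IsLogDer A m (θ i)) ∧
  ∀ η : Der K ℓ, IsLogDer A m η → ∃! f : Fin ℓ → S K ℓ, η = ∑ i, f i • θ i

/-- `(A,m)` is free with a homogeneous basis of degrees (exponents) `d`. -/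
def IsFreeWithExp (A : Arrangement K ℓ) (m : (Fin ℓ → K) → ℕ) (d : Fin ℓ → ℕ) : Prop :=
  ∃ θ : Fin ℓ → Der K ℓ, (∀ i, IsHomogOfDeg (θ i) (d i)) ∧ IsDerBasis A m θ

/-- `(A,m)` is a free multiarrangement. -/
def IsFree (A : Arrangement K ℓ) (m : (Fin ℓ → K) → ℕ) : Prop :=
  ∃ d : Fin ℓ → ℕ, IsFreeWithExp A m d

/-- `|m|`, the total multiplicity. -/
def msum (A : Arrangement K ℓ) (m : (Fin ℓ → K) → ℕ) : ℕ := ∑ c ∈ A.hyps, m c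

/-- The rank of an arrangement: the dimension of the span of its covectors. -/
noncomputable def rank (A : Arrangement K ℓ) : ℕ :=
  Module.finrank K (Submodule.span K (A.hyps : Set (Fin ℓ → K)))

/-- `A` is reducible: after a linear change of coordinates it is a product of two
arrangements in complementary (nonzero) subspaces.  In terms of covectors: the
covectors split between two complementary nonzero subspaces of the dual space. -/
def Reducible (A : Arrangement K ℓ) : Prop :=
  ∃ W₁ W₂ : Submodule K (Fin ℓ → K), W₁ ≠ ⊥ ∧ W₂ ≠ ⊥ ∧ W₁ ⊓ W₂ = ⊥ ∧ W₁ ⊔ W₂ = ⊤ ∧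
    ∀ c ∈ A.hyps, c ∈ W₁ ∨ c ∈ W₂

/-- The hyperplanes of the localization at a flat; the flat of codimension `r` is
encoded by the `r`-dimensional subspace `U` of the dual space spanned by the
covectors of the hyperplanes containing it. -/
noncomputable def locHyps (A : Arrangement K ℓ) (U : Submodule K (Fin ℓ → K)) :
    Finset (Fin ℓ → K) :=
  A.hyps.filter (· ∈ U)

/-- `U` encodes a flat of `A` of codimension `r` (an element of `L_r(A)`). -/
def IsFlatOfRank (A : Arrangement K ℓ) (U : Submodule K (Fin ℓ → K)) (r : ℕ) : Prop :=
  Module.finrank K U = r ∧ Submodule.span K (locHyps A U : Set (Fin ℓ → K)) = U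

/-- The localization `A_X` of `A` at the flat encoded by `U`. -/
noncomputable def localize (A : Arrangement K ℓ) (U : Submodule K (Fin ℓ → K)) :
    Arrangement K ℓ where
  hyps := locHyps A U
  ne_zero := fun c hc => A.ne_zero c (Finset.mem_filter.mp hc).1
  nonparallel := fun c hc c' hc' =>
    A.nonparallel c (Finset.mem_filter.mp hc).1 c' (Finset.mem_filter.mp hc').1

/-- `H₀` (given by covector `c₀`) is a heavy hyperplane of `(A,m)`. -/
def IsHeavy (A : Arrangement K ℓ) (m : (Fin ℓ → K) → ℕ) (c₀ : Fin ℓ → K) : Prop :=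
  c₀ ∈ A.hyps ∧ (∑ c ∈ A.hyps.erase c₀, m c) ≤ m c₀

/-- `H₀` (given by covector `c₀`) is a locally heavy hyperplane of `(A,m)`. -/
def IsLocallyHeavy (A : Arrangement K ℓ) (m : (Fin ℓ → K) → ℕ) (c₀ : Fin ℓ → K) : Prop :=
  c₀ ∈ A.hyps ∧ ∀ U : Submodule K (Fin ℓ → K), IsFlatOfRank A U 2 → c₀ ∈ U →
    3 ≤ (locHyps A U).card → (∑ c ∈ (locHyps A U).erase c₀, m c) ≤ m c₀

/-- `b` is the second Betti number of the rank-2 localization of `(A,m)` at `U`: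
the product of the nonzero exponents of this free rank-2 multiarrangement. -/
def IsLocalB2 (A : Arrangement K ℓ) (m : (Fin ℓ → K) → ℕ)
    (U : Submodule K (Fin ℓ → K)) (b : ℕ) : Prop :=
  ∃ d : Fin ℓ → ℕ, IsFreeWithExp (localize A U) m d ∧
    b = ∏ i ∈ Finset.univ.filter (fun i => d i ≠ 0), d i

/-- `b` is the second Betti number `b₂(A,m)` of the multiarrangement `(A,m)`. -/
def IsB2 (A : Arrangement K ℓ) (m : (Fin ℓ → K) → ℕ) (b : ℕ) : Prop :=
  ∃ bloc : Submodule K (Fin ℓ → K) → ℕ,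
    (∀ U, IsFlatOfRank A U 2 → IsLocalB2 A m U (bloc U)) ∧
    b = ∑ᶠ U ∈ {U : Submodule K (Fin ℓ → K) | IsFlatOfRank A U 2}, bloc U

/-- The second Betti number of a simple arrangement:
`b₂(A) = Σ_{X ∈ L₂(A)} (|A_X| - 1)`. -/
noncomputable def b2Simple (A : Arrangement K ℓ) : ℕ :=
  ∑ᶠ U ∈ {U : Submodule K (Fin ℓ → K) | IsFlatOfRank A U 2}, ((locHyps A U).card - 1)

/-- The Euler–Ziegler multiplicity of the restricted hyperplane `H₀ ∩ ker(c)` of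
`A^{H₀}`: `m^{H₀}(X) = |m_X| - m(H₀)`. -/
noncomputable def EZmult (A : Arrangement K ℓ) (m : (Fin ℓ → K) → ℕ)
    (c₀ c : Fin ℓ → K) : ℕ :=
  (∑ c' ∈ A.hyps.filter (· ∈ Submodule.span K ({c₀, c} : Set (Fin ℓ → K))), m c') - m c₀

/-- Two covectors are parallel (define the same hyperplane). -/
def Parallel {n : ℕ} (b b' : Fin n → K) : Prop := ∃ t : K, t ≠ 0 ∧ b' = t • b

/-- The covector on `K^n` obtained by restricting the covector `c` on `K^{n+1}` to the
hyperplane `ker c₀`, transported by the linear isomorphism `e : ker c₀ ≃ K^n`. -/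
noncomputable def resCov {n : ℕ} (c₀ : Fin (n+1) → K)
    (e : ↥(LinearMap.ker (toFunc c₀)) ≃ₗ[K] (Fin n → K)) (c : Fin (n+1) → K) :
    Fin n → K :=
  fun j => toFunc c ((e.symm (Pi.single j 1) : ↥(LinearMap.ker (toFunc c₀))) : Fin (n+1) → K)

/-- `(B, mB)` is (a model, in coordinates, of) the Euler–Ziegler restriction
`(A^{H₀}, m^{H₀})` of `(A,m)` to the hyperplane `H₀ = ker c₀ ∈ A`. -/
def IsEZRes {n : ℕ} (A : Arrangement K (n+1)) (m : (Fin (n+1) → K) → ℕ)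
    (c₀ : Fin (n+1) → K) (B : Arrangement K n) (mB : (Fin n → K) → ℕ) : Prop :=
  c₀ ∈ A.hyps ∧
  ∃ e : ↥(LinearMap.ker (toFunc c₀)) ≃ₗ[K] (Fin n → K),
    (∀ c ∈ A.hyps.erase c₀, ∃ b ∈ B.hyps,
        Parallel b (resCov c₀ e c) ∧ mB b = EZmult A m c₀ c) ∧
    (∀ b ∈ B.hyps, ∃ c ∈ A.hyps.erase c₀, Parallel b (resCov c₀ e c))

/-- A combinatorial equivalence between two arrangements: a bijection between the
hyperplanes inducing an isomorphism of intersection lattices (it preserves the rank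
of every subset of hyperplanes). -/
def CombEquiv (A A' : Arrangement K ℓ) : Prop :=
  ∃ φ : (Fin ℓ → K) → (Fin ℓ → K), Set.BijOn φ ↑A.hyps ↑A'.hyps ∧
    ∀ T : Finset (Fin ℓ → K), T ⊆ A.hyps →
      Module.finrank K (Submodule.span K (T : Set (Fin ℓ → K))) =
      Module.finrank K (Submodule.span K ((T.image φ) : Set (Fin ℓ → K)))

theorem linForm_smul (t : K) (c : Fin ℓ → K) : linForm (t • c) = C t * linForm c := by
  simp [linForm, Finset.mul_sum, mul_assoc]

theorem linForm_sub (c d : Fin ℓ → K) : linForm (c - d) = linForm c - linForm d := by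
  simp [linForm, sub_mul, Finset.sum_sub_distrib]

theorem linForm_single (i : Fin ℓ) : linForm (Pi.single i (1 : K)) = X i := by
  simp only [linForm]
  rw [Finset.sum_eq_single i]
  · simp
  · intro j _ hj
    simp [hj]
  · simp

theorem coeff_single_linForm (c : Fin ℓ → K) (i : Fin ℓ) :
    coeff (Finsupp.single i 1) (linForm c) = c i := by
  simp [linForm, coeff_sum, coeff_C_mul, coeff_X, Finsupp.single_left_inj]

theorem linForm_eq_zero {c : Fin ℓ → K} (h : linForm c = 0) : c = 0 := by
  funext i
  rw [← coeff_single_linForm c i, h]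
  simp

theorem constantCoeff_linForm (c : Fin ℓ → K) : constantCoeff (linForm c) = 0 := by
  simp [linForm]

theorem derivation_linForm (θ : Der K ℓ) (c : Fin ℓ → K) :
    θ (linForm c) = ∑ i, C (c i) * θ (X i) := by
  have h : ∀ i, θ (C (c i)) = 0 := fun i => θ.map_algebraMap (c i)
  simp [linForm, h]

/-- Restriction of polynomials to the hyperplane of a nonzero covector `c`, realised as an
endomorphism of `S` which acts on linear forms through a projection of covectors along `c`. -/
theorem exists_restriction {c : Fin ℓ → K} (hc : c ≠ 0) :
    ∃ (π : S K ℓ →ₐ[K] S K ℓ) (P : (Fin ℓ → K) → (Fin ℓ → K)),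
      (∀ d, π (linForm d) = linForm (P d)) ∧ (∀ f, linForm c ∣ f - π f) ∧
      π (linForm c) = 0 ∧ ∀ d, ∃ t : K, d = P d + t • c := by
  obtain ⟨j, hj⟩ : ∃ j, c j ≠ 0 := by
    by_contra! h
    exact hc (funext h)
  let P : (Fin ℓ → K) → (Fin ℓ → K) := fun d => d - (d j / c j) • c
  let π : S K ℓ →ₐ[K] S K ℓ := aeval fun i => linForm (P (Pi.single i 1))
  have hπ : ∀ d, π (linForm d) = linForm (P d) := by
    intro d
    have h1 : π (linForm d) = ∑ i, C (d i) * linForm (P (Pi.single i 1)) := by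
      have h0 : ∀ i, π (C (d i)) = C (d i) := fun i => π.commutes (d i)
      simp only [linForm, map_sum, map_mul, h0]
      simp [π, linForm]
    rw [h1]
    simp only [P, linForm_sub, linForm_smul, linForm_single, mul_sub, Finset.sum_sub_distrib]
    congr 1
    rw [Finset.sum_eq_single j]
    · rw [Pi.single_eq_same, ← mul_assoc, ← C_mul, mul_one_div]
    · intro i _ hij
      simp [hij.symm]
    · simp
  refine ⟨π, P, hπ, ?_, ?_, fun d => ⟨d j / c j, by simp [P]⟩⟩
  · intro f
    induction f using MvPolynomial.induction_on with
    | C a =>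
      have : π (C a) = C a := π.commutes a
      simp [this]
    | add p q hp hq =>
      rw [map_add, add_sub_add_comm]
      exact dvd_add hp hq
    | mul_X p i hp =>
      have h1 : linForm c ∣ X i - π (X i) := by
        rw [← linForm_single, hπ]
        simp only [P, linForm_sub, linForm_smul, sub_sub_cancel]
        exact dvd_mul_left _ _
      have h2 : p * X i - π (p * X i) = (p - π p) * X i + π p * (X i - π (X i)) := by
        rw [map_mul]; ring
      rw [h2]
      exact dvd_add (hp.mul_right _) (h1.mul_left _)
  · rw [hπ]
    simp [P, div_self hj, linForm]

theorem prime_linForm {c : Fin ℓ → K} (hc : c ≠ 0) : Prime (linForm c) := by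
  obtain ⟨π, P, -, hdvd, hker, -⟩ := exists_restriction hc
  have key : ∀ f, linForm c ∣ f ↔ π f = 0 := by
    intro f
    constructor
    · rintro ⟨g, rfl⟩
      rw [map_mul, hker, zero_mul]
    · intro h
      simpa [h] using hdvd f
  refine ⟨fun h => hc (linForm_eq_zero h), fun h => ?_, fun a b hab => ?_⟩
  · have := (key 1).1 h.dvd
    simp at this
  · rw [key, map_mul, mul_eq_zero] at hab
    rwa [key, key]

theorem exists_smul_of_linForm_dvd {c d : Fin ℓ → K} (hc : c ≠ 0)
    (h : linForm c ∣ linForm d) : ∃ t : K, d = t • c := by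
  obtain ⟨π, P, hπ, -, hker, hP⟩ := exists_restriction hc
  obtain ⟨g, hg⟩ := h
  obtain ⟨t, ht⟩ := hP d
  have : linForm (P d) = 0 := by rw [← hπ, hg, map_mul, hker, zero_mul]
  exact ⟨t, by rw [linForm_eq_zero this, zero_add] at ht; exact ht⟩

/-- A product of powers of pairwise non-dividing primes divides every common multiple of them. -/
theorem prod_prime_pow_dvd {R ι : Type*} [CommRing R] [IsDomain R] (p : ι → R) (k : ι → ℕ)
    (s : Finset ι) (hp : ∀ i ∈ s, Prime (p i))
    (hne : ∀ i ∈ s, ∀ j ∈ s, i ≠ j → ¬ p i ∣ p j) {F : R} (hF : ∀ i ∈ s, p i ^ k i ∣ F) :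
    ∏ i ∈ s, p i ^ k i ∣ F := by
  induction s using Finset.induction_on with
  | empty => simp
  | insert a s ha ih =>
    obtain ⟨u, hu⟩ := ih (fun i hi => hp i (Finset.mem_insert_of_mem hi))
      (fun i hi j hj => hne i (Finset.mem_insert_of_mem hi) j (Finset.mem_insert_of_mem hj))
      (fun i hi => hF i (Finset.mem_insert_of_mem hi))
    have hpa := hp a (Finset.mem_insert_self a s)
    have hnd : ¬ p a ∣ ∏ i ∈ s, p i ^ k i := by
      intro h
      obtain ⟨i, hi, hd⟩ := hpa.exists_mem_finset_dvd h
      exact hne a (Finset.mem_insert_self a s) i (Finset.mem_insert_of_mem hi)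
        (fun h => ha (h ▸ hi)) (hpa.dvd_of_dvd_pow hd)
    have h1 := hF a (Finset.mem_insert_self a s)
    rw [hu] at h1
    rw [Finset.prod_insert ha, hu, mul_comm]
    exact mul_dvd_mul_left _ (hpa.pow_dvd_of_dvd_mul_left _ hnd h1)

/-- Chinese-remainder type statement modulo a linear form: if the forms of `s` stay pairwise
coprime on the hyperplane of `c₀`, divisibility by their powers modulo `linForm c₀` implies
divisibility by the product. -/
theorem exists_prod_mul_modEq {c₀ : Fin ℓ → K} (h₀ : c₀ ≠ 0) (s : Finset (Fin ℓ → K))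
    (m : (Fin ℓ → K) → ℕ) (hs : ∀ c ∈ s, ∀ t : K, c ≠ t • c₀)
    (hss : ∀ c ∈ s, ∀ d ∈ s, c ≠ d → ∀ t u : K, d ≠ t • c + u • c₀) {F : S K ℓ}
    (hF : ∀ c ∈ s, ∃ u, linForm c₀ ∣ F - linForm c ^ m c * u) :
    ∃ p, linForm c₀ ∣ F - (∏ c ∈ s, linForm c ^ m c) * p := by
  obtain ⟨π, P, hπ, hdvd, hker, hP⟩ := exists_restriction h₀
  have hz : ∀ f, linForm c₀ ∣ f → π f = 0 := by
    rintro f ⟨g, rfl⟩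
    rw [map_mul, hker, zero_mul]
  have hP0 : ∀ c ∈ s, P c ≠ 0 := by
    intro c hc h
    obtain ⟨t, ht⟩ := hP c
    rw [h, zero_add] at ht
    exact hs c hc t ht
  have h1 : ∏ c ∈ s, linForm (P c) ^ m c ∣ π F := by
    refine prod_prime_pow_dvd (fun c => linForm (P c)) m s
      (fun c hc => prime_linForm (hP0 c hc)) ?_ ?_
    · intro c hc d hd hcd h
      obtain ⟨t, ht⟩ := exists_smul_of_linForm_dvd (hP0 c hc) h
      obtain ⟨a, ha⟩ := hP c
      obtain ⟨b, hb⟩ := hP d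
      refine hss c hc d hd hcd t (b - t * a) ?_
      have hc' : P c = c - a • c₀ := eq_sub_of_add_eq ha.symm
      rw [ht, hc'] at hb
      rw [hb]
      module
    · intro c hc
      obtain ⟨u, hu⟩ := hF c hc
      refine ⟨π u, ?_⟩
      have := hz _ hu
      rw [map_sub, sub_eq_zero] at this
      rw [this, map_mul, map_pow, hπ]
  obtain ⟨u, hu⟩ := h1
  refine ⟨u, ?_⟩
  have h2 : linForm c₀ ∣ (∏ c ∈ s, linForm c ^ m c) - ∏ c ∈ s, linForm (P c) ^ m c := by
    have := hdvd (∏ c ∈ s, linForm c ^ m c)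
    simpa [map_prod, hπ] using this
  have h3 : F - (∏ c ∈ s, linForm c ^ m c) * u =
      (F - π F) - ((∏ c ∈ s, linForm c ^ m c) - ∏ c ∈ s, linForm (P c) ^ m c) * u := by
    rw [hu]; ring
  rw [h3]
  exact dvd_sub (hdvd F) (h2.mul_right _)

theorem exists_prod_mul_modEq_pow {c₀ : Fin ℓ → K} (h₀ : c₀ ≠ 0) (s : Finset (Fin ℓ → K))
    (m : (Fin ℓ → K) → ℕ) (hs : ∀ c ∈ s, ∀ t : K, c ≠ t • c₀)
    (hss : ∀ c ∈ s, ∀ d ∈ s, c ≠ d → ∀ t u : K, d ≠ t • c + u • c₀)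
    (hnd : ∀ c ∈ s, ¬ linForm c₀ ∣ linForm c ^ m c) {F : S K ℓ} (k : ℕ)
    (hF : ∀ c ∈ s, ∃ u, linForm c₀ ^ k ∣ F - linForm c ^ m c * u) :
    ∃ p, linForm c₀ ^ k ∣ F - (∏ c ∈ s, linForm c ^ m c) * p := by
  have hprime := prime_linForm h₀
  induction k with
  | zero => exact ⟨0, by simp⟩
  | succ k ih =>
    obtain ⟨p, w, hw⟩ := ih fun c hc => by
      obtain ⟨u, hu⟩ := hF c hc
      exact ⟨u, (pow_dvd_pow _ k.le_succ).trans hu⟩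
    obtain ⟨q, v, hv⟩ := exists_prod_mul_modEq h₀ s m hs hss (F := w) (by
      intro c hc
      obtain ⟨u, x, hx⟩ := hF c hc
      obtain ⟨Q, hQ⟩ := Finset.dvd_prod_of_mem (fun c => linForm c ^ m c) hc
      have h1 : linForm c ^ m c * (u - Q * p) =
          linForm c₀ ^ k * (w - linForm c₀ * x) := by
        rw [hQ] at hw
        linear_combination hw - hx
      obtain ⟨y, hy⟩ := hprime.pow_dvd_of_dvd_mul_left k (hnd c hc) ⟨_, h1⟩
      refine ⟨y, x, ?_⟩
      rw [hy] at h1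
      have := mul_left_cancel₀ (pow_ne_zero k hprime.ne_zero)
        (show linForm c₀ ^ k * (linForm c ^ m c * y) = _ by rw [← h1]; ring)
      linear_combination -this)
    exact ⟨p + linForm c₀ ^ k * q, v, by linear_combination hw + linForm c₀ ^ k * hv⟩

/-- The constant vector field with coefficients `v`. -/
noncomputable def constDer (v : Fin ℓ → K) : Der K ℓ := mkDerivation K fun i => C (v i)

theorem constDer_linForm (v c : Fin ℓ → K) :
    constDer v (linForm c) = C (∑ i, c i * v i) := by
  rw [derivation_linForm]
  simp [constDer, mkDerivation_X]

theorem exists_vector_separating {c₀ c : Fin ℓ → K} (h : ∀ t : K, c₀ ≠ t • c) :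
    ∃ v : Fin ℓ → K, ∑ i, c₀ i * v i = 1 ∧ ∑ i, c i * v i = 0 := by
  have hmem : c₀ ∉ Submodule.span K {c} := by
    intro hm
    obtain ⟨t, ht⟩ := Submodule.mem_span_singleton.1 hm
    exact h t ht.symm
  obtain ⟨f, hf, hle⟩ := Submodule.exists_le_ker_of_notMem hmem
  have hsum : ∀ d : Fin ℓ → K, ∑ i, d i * ((f c₀)⁻¹ * f (Pi.single i 1)) = (f c₀)⁻¹ * f d := by
    intro d
    conv_rhs => rw [LinearMap.pi_apply_eq_sum_univ f d]
    rw [Finset.mul_sum]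
    refine Finset.sum_congr rfl fun i _ => ?_
    have : (Pi.single i 1 : Fin ℓ → K) = fun j => if i = j then 1 else 0 := by
      funext j
      simp [Pi.single_apply, eq_comm]
    rw [this, smul_eq_mul]
    ring
  refine ⟨fun i => (f c₀)⁻¹ * f (Pi.single i 1), ?_, ?_⟩
  · rw [hsum, inv_mul_cancel₀ hf]
  · have : f c = 0 := hle (Submodule.mem_span_singleton_self c)
    rw [hsum, this, mul_zero]

theorem sum_mul_sub_mul_smul (θ : Fin ℓ → Der K ℓ) (a b : S K ℓ) (f g : Fin ℓ → S K ℓ) :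
    ∑ i, (a * f i - b * g i) • θ i = a • ∑ i, f i • θ i - b • ∑ i, g i • θ i := by
  rw [Finset.smul_sum, Finset.smul_sum, ← Finset.sum_sub_distrib]
  exact Finset.sum_congr rfl fun i _ => by module

theorem IsLogDer.sum_smul {A : Arrangement K ℓ} {m : (Fin ℓ → K) → ℕ} {θ : Fin ℓ → Der K ℓ}
    (hθ : ∀ i, IsLogDer A m (θ i)) (f : Fin ℓ → S K ℓ) : IsLogDer A m (∑ i, f i • θ i) := by
  intro c hc
  have h : (∑ i, f i • θ i) (linForm c) = ∑ i, f i * θ i (linForm c) := by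
    exact map_sum ((Pi.evalAddMonoidHom _ (linForm c)).comp Derivation.coeFnAddMonoidHom) _ _
  rw [h]
  exact Finset.dvd_sum fun i _ => (hθ i c hc).mul_left _

theorem IsDerBasis.coeff_unique {A : Arrangement K ℓ} {m : (Fin ℓ → K) → ℕ}
    {θ : Fin ℓ → Der K ℓ} (hθ : IsDerBasis A m θ) {f g : Fin ℓ → S K ℓ}
    (h : ∑ i, f i • θ i = ∑ i, g i • θ i) : f = g :=
  (hθ.2 _ (IsLogDer.sum_smul hθ.1 f)).unique rfl h

/-- A generic hyperplane shares no three-term linear relation with the other hyperplanes. -/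
theorem generic_notMem_span {A : Arrangement K ℓ} {c₀ : Fin ℓ → K} (hc₀ : c₀ ∈ A.hyps)
    (hgen : ∀ U : Submodule K (Fin ℓ → K), IsFlatOfRank A U 2 → c₀ ∈ U →
      (locHyps A U).card = 2) {c d : Fin ℓ → K} (hc : c ∈ A.hyps) (hd : d ∈ A.hyps)
    (hc0 : c ≠ c₀) (hd0 : d ≠ c₀) (hcd : c ≠ d) (t u : K) : d ≠ t • c + u • c₀ := by
  intro h
  let U : Submodule K (Fin ℓ → K) := Submodule.span K {c, c₀}
  have hcU : c ∈ U := Submodule.subset_span (by simp)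
  have hc₀U : c₀ ∈ U := Submodule.subset_span (by simp)
  have hdU : d ∈ U := h ▸ U.add_mem (U.smul_mem _ hcU) (U.smul_mem _ hc₀U)
  have hlin : LinearIndependent K ![c, c₀] := by
    rw [LinearIndependent.pair_iff' (A.ne_zero c hc)]
    exact fun a ha => A.nonparallel c hc c₀ hc₀ hc0 a ha.symm
  have hflat : IsFlatOfRank A U 2 := by
    constructor
    · have := finrank_span_eq_card hlin
      rwa [Matrix.range_cons_cons_empty, Fintype.card_fin] at this
    · refine le_antisymm (Submodule.span_le.2 fun x hx => ?_) (Submodule.span_mono ?_)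
      · exact (Finset.mem_filter.1 hx).2
      · rintro x (rfl | rfl)
        · exact Finset.mem_filter.2 ⟨hc, hcU⟩
        · exact Finset.mem_filter.2 ⟨hc₀, hc₀U⟩
  have hcard := hgen U hflat hc₀U
  have hsub : ({c, c₀, d} : Finset (Fin ℓ → K)) ⊆ locHyps A U := by
    intro x hx
    simp only [Finset.mem_insert, Finset.mem_singleton] at hx
    rcases hx with rfl | rfl | rfl
    · exact Finset.mem_filter.2 ⟨hc, hcU⟩
    · exact Finset.mem_filter.2 ⟨hc₀, hc₀U⟩
    · exact Finset.mem_filter.2 ⟨hd, hdU⟩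
  have h3 : ({c, c₀, d} : Finset (Fin ℓ → K)).card = 3 :=
    Finset.card_eq_three.2 ⟨c, c₀, d, hc0, hcd, hd0.symm, rfl⟩
  have := Finset.card_le_card hsub
  omega

/-- If `(A, m)` is free and `c₀` is generic, the hyperplane of `c₀` can be split off by a vector
field which is logarithmic along all other hyperplanes. -/
theorem exists_splitting_derivation {A : Arrangement K ℓ} {c₀ : Fin ℓ → K} (hc₀ : c₀ ∈ A.hyps)
    (hgen : ∀ U : Submodule K (Fin ℓ → K), IsFlatOfRank A U 2 → c₀ ∈ U →
      (locHyps A U).card = 2) {m : (Fin ℓ → K) → ℕ} {θ : Fin ℓ → Der K ℓ}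
    (hθ : IsDerBasis A m θ) {c₁ : Fin ℓ → K} (hc₁ : c₁ ∈ A.hyps.erase c₀) :
    ∃ η : Der K ℓ, linForm c₀ ^ m c₀ ∣ 1 - η (linForm c₀) ∧
      ∀ c ∈ A.hyps.erase c₀, linForm c ^ m c ∣ η (linForm c) := by
  set s := A.hyps.erase c₀ with hs
  set a : S K ℓ := linForm c₀ ^ m c₀ with ha
  set Q : (Fin ℓ → K) → S K ℓ := fun c => ∏ d ∈ s.erase c, linForm d ^ m d with hQ
  have h₀ := A.ne_zero c₀ hc₀
  have hprime := prime_linForm h₀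
  have ha0 : a ≠ 0 := pow_ne_zero _ hprime.ne_zero
  have hsA : ∀ c ∈ s, c ∈ A.hyps := fun c hc => Finset.mem_of_mem_erase hc
  have hsne : ∀ c ∈ s, c ≠ c₀ := fun c hc => Finset.ne_of_mem_erase hc
  have hndvd : ∀ c ∈ A.hyps, ∀ d ∈ A.hyps, c ≠ d → ¬ linForm c ∣ linForm d ^ m d := by
    intro c hc d hd hcd h
    obtain ⟨t, ht⟩ := exists_smul_of_linForm_dvd (A.ne_zero c hc)
      ((prime_linForm (A.ne_zero c hc)).dvd_of_dvd_pow h)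
    exact A.nonparallel c hc d hd hcd t ht
  have hndvd_prod : ∀ c ∈ A.hyps, ∀ u : Finset (Fin ℓ → K), u ⊆ A.hyps → c ∉ u →
      ¬ linForm c ∣ ∏ d ∈ u, linForm d ^ m d := by
    intro c hc u hu hcu h
    obtain ⟨d, hd, hdvd⟩ := (prime_linForm (A.ne_zero c hc)).exists_mem_finset_dvd h
    exact hndvd c hc d (hu hd) (fun h => hcu (h ▸ hd)) hdvd
  have hQc₀ : ∀ c ∈ s, ¬ linForm c₀ ∣ Q c := fun c _ =>
    hndvd_prod c₀ hc₀ _ (fun d hd => hsA d (Finset.mem_of_mem_erase hd)) (by simp [hs])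
  have hQc : ∀ c ∈ s, ¬ linForm c ∣ Q c := fun c hc =>
    hndvd_prod c (hsA c hc) _ (fun d hd => hsA d (Finset.mem_of_mem_erase hd)) (by simp)
  have hQd : ∀ c, ∀ d ∈ s, d ≠ c → linForm d ^ m d ∣ Q c := fun c d hd hdc =>
    Finset.dvd_prod_of_mem (fun d => linForm d ^ m d) (Finset.mem_erase.2 ⟨hdc, hd⟩)
  have hQmul : ∀ c ∈ s, linForm c ^ m c * Q c = ∏ d ∈ s, linForm d ^ m d := fun c hc =>
    Finset.mul_prod_erase s (fun d => linForm d ^ m d) hc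
  have hcancel : ∀ x y : S K ℓ, ¬ linForm c₀ ∣ x → a ∣ x * y → a ∣ y := fun x y hx h =>
    hprime.pow_dvd_of_dvd_mul_left _ hx h
  choose! v hv₀ hv using fun c (hc : c ∈ s) =>
    exists_vector_separating fun t => A.nonparallel c (hsA c hc) c₀ hc₀ (hsne c hc) t
  have hD₀ : ∀ c ∈ s, constDer (v c) (linForm c₀) = 1 := fun c hc => by
    rw [constDer_linForm, hv₀ c hc, C_1]
  have hD : ∀ c ∈ s, constDer (v c) (linForm c) = 0 := fun c hc => by
    rw [constDer_linForm, hv c hc, C_0]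
  have hcases : ∀ d ∈ A.hyps, d = c₀ ∨ d ∈ s := fun d hd => by
    by_cases h : d = c₀
    · exact Or.inl h
    · exact Or.inr (Finset.mem_erase.2 ⟨h, hd⟩)
  have hlog : ∀ c ∈ s, IsLogDer A m ((a * Q c) • constDer (v c)) := by
    intro c hc d hd
    rw [Derivation.smul_apply, smul_eq_mul]
    rcases hcases d hd with rfl | hds
    · exact (dvd_mul_right _ _).mul_right _
    · by_cases hdc : d = c
      · rw [hdc, hD c hc, mul_zero]
        exact dvd_zero _
      · exact ((hQd c d hds hdc).mul_left _).mul_right _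
  choose! f hf _ using fun c (hc : c ∈ s) => hθ.2 _ (hlog c hc)
  have hdiff : ∀ c ∈ s, ∀ d ∈ s, ∀ i, a ∣ Q d * f c i - Q c * f d i := by
    intro c hc d hd i
    have hl : IsLogDer A m ((Q c * Q d) • (constDer (v c) - constDer (v d))) := by
      intro e he
      rw [Derivation.smul_apply, Derivation.sub_apply, smul_eq_mul]
      rcases hcases e he with rfl | hes
      · rw [hD₀ c hc, hD₀ d hd, sub_self, mul_zero]
        exact dvd_zero _
      · by_cases hec : e = c
        · by_cases hed : e = d
          · rw [← hec, ← hed, sub_self, mul_zero]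
            exact dvd_zero _
          · exact ((hQd d e hes hed).mul_left _).mul_right _
        · exact ((hQd c e hes hec).mul_right _).mul_right _
    obtain ⟨g, hg, -⟩ := hθ.2 _ hl
    have heq : ∑ i, (Q d * f c i - Q c * f d i) • θ i = ∑ i, (a * g i) • θ i := by
      rw [sum_mul_sub_mul_smul]
      simp only [mul_smul, ← Finset.smul_sum]
      rw [← hf c hc, ← hf d hd, ← hg]
      module
    exact ⟨g i, congrFun (hθ.coeff_unique heq) i⟩
  have hp : ∀ i, ∃ p, ∀ c ∈ s, a ∣ f c i - Q c * p := by
    intro i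
    have hcong : ∀ c ∈ s, a ∣ linForm c₁ ^ m c₁ * f c₁ i - linForm c ^ m c * f c i := by
      intro c hc
      refine hcancel (∏ d ∈ s, linForm d ^ m d) _
        (hndvd_prod c₀ hc₀ s hsA (by simp [hs])) ?_
      have h1 := (hdiff c₁ hc₁ c hc i).mul_left (linForm c ^ m c * linForm c₁ ^ m c₁)
      have h2 : (∏ d ∈ s, linForm d ^ m d) *
          (linForm c₁ ^ m c₁ * f c₁ i - linForm c ^ m c * f c i) =
          linForm c ^ m c * linForm c₁ ^ m c₁ * (Q c * f c₁ i - Q c₁ * f c i) := by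
        linear_combination (-(linForm c₁ ^ m c₁ * f c₁ i)) * hQmul c hc +
          (linForm c ^ m c * f c i) * hQmul c₁ hc₁
      rwa [h2]
    obtain ⟨p, hp⟩ := exists_prod_mul_modEq_pow h₀ s m
      (fun c hc => A.nonparallel c₀ hc₀ c (hsA c hc) (hsne c hc).symm)
      (fun c hc d hd hcd => generic_notMem_span hc₀ hgen (hsA c hc) (hsA d hd)
        (hsne c hc) (hsne d hd) hcd)
      (fun c hc => hndvd c₀ hc₀ c (hsA c hc) (hsne c hc).symm) (m c₀)
      (fun c hc => ⟨f c i, hcong c hc⟩)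
    refine ⟨p, fun c hc => ?_⟩
    refine hcancel (linForm c ^ m c) _ (hndvd c₀ hc₀ c (hsA c hc) (hsne c hc).symm) ?_
    have h3 : linForm c ^ m c * (f c i - Q c * p) =
        (linForm c₁ ^ m c₁ * f c₁ i - (∏ d ∈ s, linForm d ^ m d) * p) -
        (linForm c₁ ^ m c₁ * f c₁ i - linForm c ^ m c * f c i) := by
      linear_combination (-p) * hQmul c hc
    rw [h3]
    exact dvd_sub hp (hcong c hc)
  choose p hp using hp
  have hζ : ∀ c ∈ s, ∃ ξ : Der K ℓ, IsLogDer A m ξ ∧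
      Q c • (a • constDer (v c) - ∑ i, p i • θ i) = a • ξ := by
    intro c hc
    choose g hg using fun i => hp i c hc
    refine ⟨∑ i, g i • θ i, IsLogDer.sum_smul hθ.1 g, ?_⟩
    have h1 : ∑ i, (f c i - Q c * p i) • θ i = ∑ i, (a * g i) • θ i := by simp only [hg]
    have h2 := sum_mul_sub_mul_smul θ 1 (Q c) (f c) p
    simp only [one_mul, one_smul] at h2
    simp only [h2, mul_smul, ← Finset.smul_sum] at h1
    rw [← h1, ← hf c hc]
    module
  have hdvd : ∀ j, a ∣ (∑ i, p i • θ i) (X j) := by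
    intro j
    obtain ⟨ξ, -, hξ⟩ := hζ c₁ hc₁
    have h1 := congrArg (fun D : Der K ℓ => D (X j)) hξ
    simp only [Derivation.smul_apply, Derivation.sub_apply, smul_eq_mul] at h1
    have h2 := hcancel _ _ (hQc₀ c₁ hc₁) ⟨_, h1⟩
    exact (dvd_sub_right (dvd_mul_right _ _)).1 h2
  choose w hw using hdvd
  have hη : ∑ i, p i • θ i = a • (mkDerivation K w : Der K ℓ) := by
    refine derivation_ext fun j => ?_
    rw [hw j, Derivation.smul_apply, mkDerivation_X, smul_eq_mul]
  have hfin : ∀ c ∈ s, ∀ d ∈ A.hyps, linForm d ^ m d ∣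
      Q c * (constDer (v c) (linForm d) - (mkDerivation K w : Der K ℓ) (linForm d)) := by
    intro c hc d hd
    obtain ⟨ξ, hl, hξ⟩ := hζ c hc
    have h1 := congrArg (fun D : Der K ℓ => D (linForm d)) hξ
    simp only [hη, Derivation.smul_apply, Derivation.sub_apply, smul_eq_mul] at h1
    have h2 := mul_left_cancel₀ ha0 (show a * (Q c * (constDer (v c) (linForm d) -
      (mkDerivation K w : Der K ℓ) (linForm d))) = _ by rw [← h1]; ring)
    rw [h2]
    exact hl d hd
  refine ⟨mkDerivation K w, ?_, fun c hc => ?_⟩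
  · have h1 := hcancel _ _ (hQc₀ c₁ hc₁) (hfin c₁ hc₁ c₀ hc₀)
    rwa [hD₀ c₁ hc₁] at h1
  · have h1 := (prime_linForm (A.ne_zero c (hsA c hc))).pow_dvd_of_dvd_mul_left _ (hQc c hc)
      (hfin c hc c (hsA c hc))
    rwa [hD c hc, zero_sub, dvd_neg] at h1

theorem reducible_of_splitting_vector {A : Arrangement K ℓ} {c₀ c₁ : Fin ℓ → K}
    (hc₀ : c₀ ∈ A.hyps) (hc₁ : c₁ ∈ A.hyps.erase c₀) {v : Fin ℓ → K}
    (hv₀ : ∑ i, c₀ i * v i = 1) (hv : ∀ c ∈ A.hyps.erase c₀, ∑ i, c i * v i = 0) :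
    Reducible A := by
  let φ : (Fin ℓ → K) →ₗ[K] K := ∑ i, v i • LinearMap.proj i
  have hφ : ∀ c, φ c = ∑ i, c i * v i := by
    intro c
    simp [φ, mul_comm]
  have hφ₀ : φ c₀ = 1 := (hφ c₀).trans hv₀
  refine ⟨LinearMap.ker φ, Submodule.span K {c₀}, ?_, ?_, ?_, ?_, ?_⟩
  · refine (Submodule.ne_bot_iff _).2 ⟨c₁, ?_, A.ne_zero c₁ (Finset.mem_of_mem_erase hc₁)⟩
    rw [LinearMap.mem_ker, hφ, hv c₁ hc₁]
  · simpa using A.ne_zero c₀ hc₀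
  · refine (Submodule.eq_bot_iff _).2 fun x hx => ?_
    obtain ⟨hx1, hx2⟩ := Submodule.mem_inf.1 hx
    obtain ⟨t, rfl⟩ := Submodule.mem_span_singleton.1 hx2
    rw [LinearMap.mem_ker, map_smul, hφ₀, smul_eq_mul, mul_one] at hx1
    rw [hx1, zero_smul]
  · refine (Submodule.eq_top_iff').2 fun x => Submodule.mem_sup.2
      ⟨x - φ x • c₀, ?_, φ x • c₀, Submodule.mem_span_singleton.2 ⟨_, rfl⟩, sub_add_cancel _ _⟩
    rw [LinearMap.mem_ker, map_sub, map_smul, hφ₀, smul_eq_mul, mul_one, sub_self]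
  · intro c hc
    by_cases h : c = c₀
    · exact Or.inr (h ▸ Submodule.mem_span_singleton_self c)
    · left
      rw [LinearMap.mem_ker, hφ, hv c (Finset.mem_erase.2 ⟨h, hc⟩)]

theorem exists_mem_erase_of_two_le_rank {A : Arrangement K ℓ} (hr : 2 ≤ rank A)
    (c₀ : Fin ℓ → K) : ∃ c₁, c₁ ∈ A.hyps.erase c₀ := by
  by_contra! h
  have hsub : A.hyps ⊆ {c₀} := fun c hc => by
    by_contra hne
    exact h c (Finset.mem_erase.2 ⟨by simpa using hne, hc⟩)
  have h1 := finrank_span_finset_le_card (R := K) A.hyps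
  have h2 := Finset.card_le_card hsub
  rw [Finset.card_singleton] at h2
  have h3 : rank A ≤ A.hyps.card := h1
  omega

theorem stmt12 (A : Arrangement K ℓ) (hA : ¬ Reducible A) (hr : 3 ≤ rank A)
    (c₀ : Fin ℓ → K) (hc₀ : c₀ ∈ A.hyps)
    (hgen : ∀ U : Submodule K (Fin ℓ → K), IsFlatOfRank A U 2 → c₀ ∈ U →
      (locHyps A U).card = 2) :
    ∀ m : (Fin ℓ → K) → ℕ, (∀ c ∈ A.hyps, 0 < m c) → ¬ IsFree A m := by
  rintro m hm ⟨d, θ, -, hθ⟩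
  obtain ⟨c₁, hc₁⟩ := exists_mem_erase_of_two_le_rank (by omega : 2 ≤ rank A) c₀
  obtain ⟨η, hη₀, hη⟩ := exists_splitting_derivation hc₀ hgen hθ hc₁
  have hconst : ∀ c, ∑ i, c i * constantCoeff (η (X i)) = constantCoeff (η (linForm c)) := by
    intro c
    simp [derivation_linForm]
  have hvanish : ∀ c ∈ A.hyps, ∀ g : S K ℓ, linForm c ^ m c ∣ g → constantCoeff g = 0 := by
    rintro c hc g ⟨h, rfl⟩
    rw [map_mul, map_pow, constantCoeff_linForm, zero_pow (hm c hc).ne', zero_mul]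
  refine hA (reducible_of_splitting_vector hc₀ hc₁ (v := fun i => constantCoeff (η (X i))) ?_ ?_)
  · have h := hvanish c₀ hc₀ _ hη₀
    rw [map_sub, map_one, sub_eq_zero] at h
    rw [hconst, ← h]
  · intro c hc
    rw [hconst, hvanish c (Finset.mem_of_mem_erase hc) _ (hη c hc)]

end ArrPaper
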